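/- For all integers n ≥ 1, ℓ ≥ 2, and 1 ≤ k ≤ ℓ−1, there exists a constant C = C(n, ℓ) such that: for every f : ℝⁿ → ℝ of class C^ℓ, every x ∈ ℝⁿ, and all real numbers 0 < a ≤ r ≤ 1, sup_{y ∈ B(x,r)} ‖D^k f(y)‖ ≤ C a^{−k} sup_{y ∈ B(x,r+a)} |f(y)| + C a^{ℓ−k} sup_{y ∈ B(x,r+a)} ‖D^ℓ f(y)‖, where D^j f denotes the j-th total (Fréchet) derivative of f and B(x,ρ) denotes the open Euclidean ball of radius ρ centered at x. -/

import Mathlib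

/-!
It suffices to bound `a ^ k * ‖D^k f y‖` by a constant times `M₀ + a ^ ℓ * M`, where `M₀` and `M`
bound `‖f‖` and `‖D^ℓ f‖` on a closed ball of radius `a` around `y`. This is proved for maps into
an arbitrary normed space `F`, so that it can be applied to `fderiv ℝ f` as well.

* For `k = 1`, restrict `f` to a line through `y`. By Taylor's theorem the Taylor polynomial at `0`
  of the restriction is bounded on `[0, a]` by `M₀ + a ^ ℓ * M`, and the linear coefficient of a
  polynomial of degree `< ℓ` is a fixed linear combination of its values at `ℓ` distinct nodes,
  because the Vandermonde matrix is invertible (`exists_weights`). Since `fderiv ℝ f y` is linear,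
  its operator norm is controlled by its values on unit vectors (`norm_fderiv_bound`).
* For larger `k`, induct on `k`, applying the induction hypothesis to `fderiv ℝ f` on the ball of
  half the radius (`norm_iteratedFDeriv_bound`). Working with values in `E →L[ℝ] F` makes a
  polarization argument for `D^k f` unnecessary.
-/

/-- The nodes `1 / (i + 1)` lie in `(0, 1]`, and some linear combination of the values at these
nodes picks out the linear coefficient of every polynomial of degree at most `n`. -/
lemma exists_weights (n : ℕ) (hn : 1 ≤ n) :
    ∃ w : Fin (n + 1) → ℝ, ∀ j ∈ Finset.range (n + 1),
      ∑ i, w i * (1 / ((i : ℕ) + 1 : ℝ)) ^ j = if j = 1 then 1 else 0 := by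
  set s : Fin (n + 1) → ℝ := fun i => 1 / ((i : ℕ) + 1 : ℝ) with hs
  have hinj : Function.Injective s := by
    intro i j hij
    simp only [hs, one_div, inv_inj, add_left_inj, Nat.cast_inj] at hij
    exact Fin.ext hij
  have hdet : IsUnit (Matrix.vandermonde s).det :=
    isUnit_iff_ne_zero.mpr (Matrix.det_vandermonde_ne_zero_iff.mpr hinj)
  refine ⟨fun i => (Matrix.vandermonde s)⁻¹ ⟨1, by omega⟩ i, fun j hj => ?_⟩
  have h := congrFun (congrFun (Matrix.nonsing_inv_mul _ hdet) ⟨1, by omega⟩)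
    ⟨j, Finset.mem_range.mp hj⟩
  simp only [Matrix.mul_apply, Matrix.vandermonde_apply, Matrix.one_apply, Fin.mk.injEq] at h
  rw [h]
  simp only [eq_comm]

lemma norm_deriv_bound (n : ℕ) (hn : 1 ≤ n) :
    ∃ C : ℝ, 0 ≤ C ∧ ∀ {F : Type} [NormedAddCommGroup F] [NormedSpace ℝ F] (g : ℝ → F),
      ContDiff ℝ (n + 1 : ℕ) g → ∀ a M₀ M : ℝ, 0 < a →
        (∀ t ∈ Set.Icc 0 a, ‖g t‖ ≤ M₀) →
        (∀ t ∈ Set.Icc 0 a, ‖iteratedDeriv (n + 1) g t‖ ≤ M) →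
          a * ‖deriv g 0‖ ≤ C * (M₀ + a ^ (n + 1) * M) := by
  obtain ⟨w, hw⟩ := exists_weights n hn
  refine ⟨∑ i, |w i|, Finset.sum_nonneg fun i _ => abs_nonneg _, ?_⟩
  intro F _ _ g hg a M₀ M ha h0 hM
  have hud : UniqueDiffOn ℝ (Set.Icc 0 a) := uniqueDiffOn_Icc ha
  have hzero : (0 : ℝ) ∈ Set.Icc 0 a := ⟨le_rfl, ha.le⟩
  have hMnn : 0 ≤ M := (norm_nonneg _).trans (hM 0 hzero)
  set P : ℝ → F := taylorWithinEval g n (Set.Icc 0 a) 0 with hP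
  have hbound : ∀ i : Fin (n + 1), ‖P (a * (1 / ((i : ℕ) + 1 : ℝ)))‖ ≤ M₀ + a ^ (n + 1) * M := by
    intro i
    have hs1 : 1 / ((i : ℕ) + 1 : ℝ) ≤ 1 := by
      rw [div_le_one (by positivity)]
      have : (0 : ℝ) ≤ (i : ℕ) := by positivity
      linarith
    set t := a * (1 / ((i : ℕ) + 1 : ℝ)) with ht
    have ht0 : 0 ≤ t := by positivity
    have hta : t ≤ a := mul_le_of_le_one_right ha.le hs1
    have hT := taylor_mean_remainder_bound (f := g) (n := n) (C := M) ha.le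
      (by exact_mod_cast hg.contDiffOn) ⟨ht0, hta⟩ (fun y hy => by
        rw [iteratedDerivWithin_eq_iteratedDeriv hud hg.contDiffAt hy]
        exact hM y hy)
    have hrem : M * (t - 0) ^ (n + 1) / (n.factorial : ℝ) ≤ a ^ (n + 1) * M := by
      rw [sub_zero, mul_comm M]
      have h1 : (1 : ℝ) ≤ n.factorial := by exact_mod_cast Nat.factorial_pos n
      refine (div_le_self (by positivity) h1).trans ?_
      gcongr
    have h3 := norm_le_norm_add_norm_sub' (P t) (g t)
    rw [norm_sub_rev] at h3
    have h4 := h0 t ⟨ht0, hta⟩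
    have h5 := norm_sub_rev (P t) (g t)
    linarith
  have hsum : ∑ i, w i • P (a * (1 / ((i : ℕ) + 1 : ℝ))) = a • deriv g 0 := by
    simp only [hP, taylor_within_apply, Finset.smul_sum, smul_smul, sub_zero]
    rw [Finset.sum_comm]
    have : ∀ j ∈ Finset.range (n + 1),
        ∑ i : Fin (n + 1), (w i * ((j.factorial : ℝ)⁻¹ * (a * (1 / ((i : ℕ) + 1 : ℝ))) ^ j)) •
          iteratedDerivWithin j g (Set.Icc 0 a) 0 =
        if j = 1 then a • deriv g 0 else 0 := by
      intro j hj
      rw [← Finset.sum_smul]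
      have e : ∑ i : Fin (n + 1), w i * ((j.factorial : ℝ)⁻¹ * (a * (1 / ((i : ℕ) + 1 : ℝ))) ^ j)
          = ((j.factorial : ℝ)⁻¹ * a ^ j) * ∑ i, w i * (1 / ((i : ℕ) + 1 : ℝ)) ^ j := by
        rw [Finset.mul_sum]
        refine Finset.sum_congr rfl fun i _ => ?_
        rw [mul_pow]
        ring
      rw [e, hw j hj]
      split_ifs with h
      · subst h
        rw [iteratedDerivWithin_one, DifferentiableAt.derivWithin
          ((hg.differentiable (by simp)) 0) (hud 0 hzero)]
        simp
      · simp
    rw [Finset.sum_congr rfl this, Finset.sum_ite_eq', if_pos (Finset.mem_range.mpr (by omega))]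
  calc a * ‖deriv g 0‖ = ‖a • deriv g 0‖ := by rw [norm_smul, Real.norm_of_nonneg ha.le]
    _ = ‖∑ i, w i • P (a * (1 / ((i : ℕ) + 1 : ℝ)))‖ := by rw [hsum]
    _ ≤ ∑ i, |w i| * (M₀ + a ^ (n + 1) * M) := by
        refine norm_sum_le_of_le _ fun i _ => ?_
        rw [norm_smul, Real.norm_eq_abs]
        exact mul_le_mul_of_nonneg_left (hbound i) (abs_nonneg _)
    _ = _ := by rw [Finset.sum_mul]

lemma norm_fderiv_bound (n : ℕ) (hn : 1 ≤ n) :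
    ∃ C : ℝ, 0 ≤ C ∧ ∀ {E F : Type} [NormedAddCommGroup E] [NormedSpace ℝ E]
      [NormedAddCommGroup F] [NormedSpace ℝ F] (f : E → F),
      ContDiff ℝ (n + 1 : ℕ) f → ∀ (y : E) (a M₀ M : ℝ), 0 < a →
        (∀ z ∈ Metric.closedBall y a, ‖f z‖ ≤ M₀) →
        (∀ z ∈ Metric.closedBall y a, ‖iteratedFDeriv ℝ (n + 1) f z‖ ≤ M) →
          a * ‖fderiv ℝ f y‖ ≤ C * (M₀ + a ^ (n + 1) * M) := by
  obtain ⟨C, hC, H⟩ := norm_deriv_bound n hn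
  refine ⟨C, hC, ?_⟩
  intro E F _ _ _ _ f hf y a M₀ M ha h0 hM
  have hy : y ∈ Metric.closedBall y a := Metric.mem_closedBall_self ha.le
  have hM0nn : 0 ≤ M₀ := (norm_nonneg _).trans (h0 y hy)
  have hMnn : 0 ≤ M := (norm_nonneg _).trans (hM y hy)
  rw [← le_div_iff₀' ha]
  refine ContinuousLinearMap.opNorm_le_of_unit_norm (by positivity) fun v hv => ?_
  rw [le_div_iff₀' ha]
  set L : ℝ →L[ℝ] E := ContinuousLinearMap.toSpanSingleton ℝ v with hL
  set f' : E → F := fun z => f (y + z) with hf'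
  have hf'c : ContDiff ℝ (n + 1 : ℕ) f' := hf.comp (contDiff_const.add contDiff_id)
  have hmem : ∀ t ∈ Set.Icc 0 a, y + L t ∈ Metric.closedBall y a := by
    intro t ht
    simp [hL, norm_smul, hv, abs_of_nonneg ht.1, ht.2]
  have key := H (f' ∘ L) (hf'c.comp L.contDiff) a M₀ M ha
    (fun t ht => h0 _ (hmem t ht)) (fun t ht => by
      rw [← norm_iteratedFDeriv_eq_norm_iteratedDeriv,
        L.iteratedFDeriv_comp_right hf'c t le_rfl, hf', iteratedFDeriv_comp_add_left]
      refine (ContinuousMultilinearMap.norm_compContinuousLinearMap_le _ _).trans ?_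
      simpa [hL, ContinuousLinearMap.norm_toSpanSingleton, hv] using hM _ (hmem t ht))
  have hd : deriv (f' ∘ L) 0 = fderiv ℝ f y v := by
    have h1 : HasFDerivAt f (fderiv ℝ f y) (y + (0 : ℝ) • v) := by
      simpa using (hf.differentiable (by simp) y).hasFDerivAt
    have h2 : HasDerivAt (fun t : ℝ => y + t • v) v 0 := by
      simpa using ((hasDerivAt_id (0 : ℝ)).smul_const v).const_add y
    exact (h1.comp_hasDerivAt (0 : ℝ) h2).deriv
  rwa [hd] at key

lemma norm_iteratedFDeriv_bound (k : ℕ) : ∀ ℓ : ℕ, k < ℓ →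
    ∃ C : ℝ, 0 ≤ C ∧ ∀ {E F : Type} [NormedAddCommGroup E] [NormedSpace ℝ E]
      [NormedAddCommGroup F] [NormedSpace ℝ F] (f : E → F),
      ContDiff ℝ ℓ f → ∀ (y : E) (a M₀ M : ℝ), 0 < a →
        (∀ z ∈ Metric.closedBall y a, ‖f z‖ ≤ M₀) →
        (∀ z ∈ Metric.closedBall y a, ‖iteratedFDeriv ℝ ℓ f z‖ ≤ M) →
          a ^ k * ‖iteratedFDeriv ℝ k f y‖ ≤ C * (M₀ + a ^ ℓ * M) := by
  induction k with
  | zero =>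
    intro ℓ _
    refine ⟨1, zero_le_one, ?_⟩
    intro E F _ _ _ _ f hf y a M₀ M ha h0 hM
    have hy : y ∈ Metric.closedBall y a := Metric.mem_closedBall_self ha.le
    have hMnn : 0 ≤ M := (norm_nonneg _).trans (hM y hy)
    have : 0 ≤ a ^ ℓ * M := by positivity
    simp only [pow_zero, one_mul, norm_iteratedFDeriv_zero]
    linarith [h0 y hy]
  | succ k ih =>
    intro ℓ' hkl
    obtain ⟨ℓ, rfl⟩ : ∃ ℓ, ℓ' = ℓ + 1 := ⟨ℓ' - 1, by omega⟩
    obtain ⟨C, hC, H⟩ := ih ℓ (by omega)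
    obtain ⟨C₁, hC₁, H₁⟩ := norm_fderiv_bound ℓ (by omega)
    refine ⟨2 ^ (k + 1) * (C * (C₁ + 1)), by positivity, ?_⟩
    intro E F _ _ _ _ f hf y a M₀ M ha h0 hM
    obtain ⟨b, rfl⟩ : ∃ b, a = 2 * b := ⟨a / 2, by ring⟩
    have hb : 0 < b := by linarith
    have hy : y ∈ Metric.closedBall y (2 * b) := Metric.mem_closedBall_self ha.le
    have hM0nn : 0 ≤ M₀ := (norm_nonneg _).trans (h0 y hy)
    have hMnn : 0 ≤ M := (norm_nonneg _).trans (hM y hy)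
    have hsub : ∀ z ∈ Metric.closedBall y b, Metric.closedBall z b ⊆ Metric.closedBall y (2 * b) := by
      intro z hz
      refine Metric.closedBall_subset_closedBall' ?_
      rw [Metric.mem_closedBall] at hz
      linarith
    have key := H (fderiv ℝ f) (hf.fderiv_right (by simp)) y b
      (C₁ * (M₀ + b ^ (ℓ + 1) * M) / b) M hb
      (fun z hz => by
        rw [le_div_iff₀' hb]
        exact H₁ f hf z b M₀ M hb (fun u hu => h0 u (hsub z hz hu))
          (fun u hu => hM u (hsub z hz hu)))
      (fun z hz => by
        rw [norm_iteratedFDeriv_fderiv]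
        exact hM z (hsub z hz (Metric.mem_closedBall_self hb.le)))
    rw [norm_iteratedFDeriv_fderiv] at key
    have hpow : b ^ (ℓ + 1) ≤ (2 * b) ^ (ℓ + 1) := by gcongr; linarith
    calc (2 * b) ^ (k + 1) * ‖iteratedFDeriv ℝ (k + 1) f y‖
        = 2 ^ (k + 1) * (b * (b ^ k * ‖iteratedFDeriv ℝ (k + 1) f y‖)) := by ring
      _ ≤ 2 ^ (k + 1) * (b * (C * (C₁ * (M₀ + b ^ (ℓ + 1) * M) / b + b ^ ℓ * M))) := by gcongr
      _ = 2 ^ (k + 1) * (C * (C₁ * (M₀ + b ^ (ℓ + 1) * M) + b ^ (ℓ + 1) * M)) := by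
          field_simp
          ring
      _ ≤ 2 ^ (k + 1) * (C * (C₁ * (M₀ + b ^ (ℓ + 1) * M) + (M₀ + b ^ (ℓ + 1) * M))) := by
          gcongr
          linarith
      _ = 2 ^ (k + 1) * (C * (C₁ + 1)) * (M₀ + b ^ (ℓ + 1) * M) := by ring
      _ ≤ _ := by gcongr

/-- The real-valued iterated supremum over a ball is an upper bound on the ball: continuity and
compactness of the closed ball give the boundedness without which the supremum is a junk value. -/
lemma le_biSup_ball {E : Type} [NormedAddCommGroup E] [NormedSpace ℝ E] [ProperSpace E]
    (h : E → ℝ) (hc : Continuous h) (hnn : ∀ z, 0 ≤ h z) (x : E) (R : ℝ) :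
    ∀ z ∈ Metric.ball x R, h z ≤ ⨆ z ∈ Metric.ball x R, h z := by
  intro z hz
  obtain ⟨B, hB⟩ := (isCompact_closedBall x R).bddAbove_image hc.continuousOn
  have hzB : ∀ u ∈ Metric.ball x R, h u ≤ B := fun u hu =>
    hB ⟨u, Metric.ball_subset_closedBall hu, rfl⟩
  have hB0 : 0 ≤ B := (hnn z).trans (hzB z hz)
  refine le_ciSup_of_le ⟨B, ?_⟩ z ?_
  · rintro _ ⟨u, rfl⟩
    exact Real.iSup_le (fun hu => hzB u hu) hB0
  · rw [ciSup_pos hz]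

/-- Euclidean-chart case of the interpolation inequality for derivatives (Lemma 2.6):
intermediate derivatives of a `C^ℓ` function on a ball are bounded by the sup of the
function and of its `ℓ`-th derivative on a slightly larger ball. -/
theorem derivative_interpolation
    (n ℓ k : ℕ) (hn : 1 ≤ n) (hℓ : 2 ≤ ℓ) (hk1 : 1 ≤ k) (hk2 : k ≤ ℓ - 1) :
    ∃ C : ℝ, ∀ f : EuclideanSpace ℝ (Fin n) → ℝ, ContDiff ℝ ℓ f →
      ∀ (x : EuclideanSpace ℝ (Fin n)) (a r : ℝ), 0 < a → a ≤ r → r ≤ 1 →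
        ∀ y ∈ Metric.ball x r,
          ‖iteratedFDeriv ℝ k f y‖ ≤
            C / a ^ k * (⨆ z ∈ Metric.ball x (r + a), |f z|) +
              C * a ^ (ℓ - k) * ⨆ z ∈ Metric.ball x (r + a), ‖iteratedFDeriv ℝ ℓ f z‖ := by
  obtain ⟨C, hC, H⟩ := norm_iteratedFDeriv_bound k ℓ (by omega)
  refine ⟨C, fun f hf x a r ha _ _ y hy => ?_⟩
  have h0 := le_biSup_ball (fun z => |f z|) hf.continuous.abs (fun z => abs_nonneg _) x (r + a)
  have hM := le_biSup_ball (fun z => ‖iteratedFDeriv ℝ ℓ f z‖)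
    (hf.continuous_iteratedFDeriv le_rfl).norm (fun z => norm_nonneg _) x (r + a)
  set M₀ := ⨆ z ∈ Metric.ball x (r + a), |f z|
  set M := ⨆ z ∈ Metric.ball x (r + a), ‖iteratedFDeriv ℝ ℓ f z‖
  -- Since `dist y x < r` is strict, even the closed ball of radius `a` around `y` fits.
  have hsub : Metric.closedBall y a ⊆ Metric.ball x (r + a) := by
    refine Metric.closedBall_subset_ball' ?_
    rw [Metric.mem_ball] at hy
    linarith
  have key := H f hf y a M₀ M ha (fun z hz => h0 z (hsub hz)) (fun z hz => hM z (hsub hz))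
  rw [← le_div_iff₀' (by positivity)] at key
  refine key.trans (le_of_eq ?_)
  have hsplit : a ^ ℓ = a ^ k * a ^ (ℓ - k) := by rw [← pow_add]; congr 1; omega
  rw [hsplit]
  field_simp
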